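/- Let D ≥ 1 and let u, v : Fin D → ℝ with Var(u) > 0 and Var(v) > 0, and let N(x)_i = (x_i − μ(x))/sqrt(Var(x)). Then N(u) = N(v) if and only if there exist a real c > 0 and a real d such that v = c•u + d•𝟙. -/

import Mathlib

open Finset

/-- Empirical mean of a vector. -/
noncomputable def emean {D : ℕ} (x : Fin D → ℝ) : ℝ := (1 / (D : ℝ)) * ∑ i, x i

/-- Empirical variance of a vector. -/
noncomputable def evar {D : ℕ} (x : Fin D → ℝ) : ℝ :=
  (1 / (D : ℝ)) * ∑ i, (x i - emean x) ^ 2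

/-- LayerNorm normalization step. -/
noncomputable def nrm {D : ℕ} (x : Fin D → ℝ) : Fin D → ℝ :=
  fun i => (x i - emean x) / Real.sqrt (evar x)

/-- LayerNorm with per-channel parameters γ, β. -/
noncomputable def layerNorm {D : ℕ} (γ β : Fin D → ℝ) (x : Fin D → ℝ) : Fin D → ℝ :=
  fun i => γ i * nrm x i + β i

/- In `c • x + d • 𝟙`, subtracting the mean removes `d` and dividing by the standard deviation
removes `c`. Conversely, `x` is recovered from `nrm x` by the positive affine map with slope
`√(evar x)` and intercept `emean x`, so vectors with the same normalization are positive affine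
images of a common vector. -/

section LayerNorm

variable {D : ℕ}

lemma emean_smul (c : ℝ) (x : Fin D → ℝ) : emean (c • x) = c * emean x := by
  simp only [emean, Pi.smul_apply, smul_eq_mul, ← mul_sum]
  ring

lemma emean_add_smul_one [NeZero D] (x : Fin D → ℝ) (d : ℝ) :
    emean (x + d • (fun _ => (1 : ℝ))) = emean x + d := by
  have hD : (D : ℝ) ≠ 0 := NeZero.ne _
  simp only [emean, Pi.add_apply, Pi.smul_apply, smul_eq_mul, mul_one, sum_add_distrib,
    sum_const, card_univ, Fintype.card_fin, nsmul_eq_mul]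
  field_simp

lemma smul_sub_emean_smul (c : ℝ) (x : Fin D → ℝ) (i : Fin D) :
    (c • x) i - emean (c • x) = c * (x i - emean x) := by
  rw [emean_smul, Pi.smul_apply, smul_eq_mul, mul_sub]

lemma add_smul_one_sub_emean (x : Fin D → ℝ) (d : ℝ) (i : Fin D) :
    (x + d • (fun _ => (1 : ℝ)) : Fin D → ℝ) i - emean (x + d • (fun _ => (1 : ℝ))) =
      x i - emean x := by
  have : NeZero D := i.neZero
  rw [emean_add_smul_one, Pi.add_apply, Pi.smul_apply, smul_eq_mul, mul_one,
    add_sub_add_right_eq_sub]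

lemma evar_smul (c : ℝ) (x : Fin D → ℝ) : evar (c • x) = c ^ 2 * evar x := by
  simp only [evar, smul_sub_emean_smul, mul_pow, ← mul_sum]
  ring

lemma evar_add_smul_one (x : Fin D → ℝ) (d : ℝ) :
    evar (x + d • (fun _ => (1 : ℝ))) = evar x := by
  simp only [evar, add_smul_one_sub_emean]

lemma nrm_smul_of_pos {c : ℝ} (hc : 0 < c) (x : Fin D → ℝ) : nrm (c • x) = nrm x := by
  funext i
  have sqrt_evar : √(evar (c • x)) = c * √(evar x) := by
    rw [evar_smul, Real.sqrt_mul (sq_nonneg c), Real.sqrt_sq hc.le]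
  simp only [nrm, smul_sub_emean_smul, sqrt_evar, mul_div_mul_left _ _ hc.ne']

lemma nrm_add_smul_one (x : Fin D → ℝ) (d : ℝ) :
    nrm (x + d • (fun _ => (1 : ℝ))) = nrm x := by
  funext i
  simp only [nrm, add_smul_one_sub_emean, evar_add_smul_one]

lemma sqrt_evar_smul_nrm_add_emean_smul_one {x : Fin D → ℝ} (hx : 0 < evar x) :
    √(evar x) • nrm x + emean x • (fun _ => (1 : ℝ)) = x := by
  funext i
  simp only [nrm, Pi.add_apply, Pi.smul_apply, smul_eq_mul, mul_one,
    mul_div_cancel₀ _ (Real.sqrt_pos.mpr hx).ne', sub_add_cancel]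

lemma nrm_eq_smul_add_smul_one (x : Fin D → ℝ) :
    nrm x = (√(evar x))⁻¹ • x + (-(emean x / √(evar x))) • (fun _ => (1 : ℝ)) := by
  funext i
  simp only [nrm, Pi.add_apply, Pi.smul_apply, smul_eq_mul]
  ring

end LayerNorm

theorem stmt_3 {D : ℕ} (hD : 1 ≤ D) (u v : Fin D → ℝ)
    (hu : 0 < evar u) (hv : 0 < evar v) :
    nrm u = nrm v ↔ ∃ c : ℝ, 0 < c ∧ ∃ d : ℝ, v = c • u + d • (fun _ => (1 : ℝ)) := by
  constructor
  · intro h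
    refine ⟨√(evar v) / √(evar u), div_pos (Real.sqrt_pos.mpr hv) (Real.sqrt_pos.mpr hu),
      emean v - √(evar v) * (emean u / √(evar u)), ?_⟩
    calc v = √(evar v) • nrm u + emean v • (fun _ => (1 : ℝ)) := by
          rw [h, sqrt_evar_smul_nrm_add_emean_smul_one hv]
      _ = _ := by
          rw [nrm_eq_smul_add_smul_one u]
          module
  · rintro ⟨c, hc, d, rfl⟩
    rw [nrm_add_smul_one, nrm_smul_of_pos hc]
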